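/- There exists c̄>0 such that for all c ∈ (0,c̄), every pair (y₁,y₂) with 1 < y₁ < y_c ≤ y_v(c) < y₂ solving the tangency system satisfies y₁ < Ψ(1/(2δ)); equivalently, the left moving boundary satisfies F(c) = Ψ⁻¹(y₁) < 1/(2δ) for all sufficiently small c>0. -/

import Mathlib

/-- The double-tangency system. -/
def TangencySystem (Hl Hrc : ℝ → ℝ) (y₁ y₂ : ℝ) : Prop :=
  deriv Hl y₁ = deriv Hrc y₂ ∧
  Hl y₁ - deriv Hl y₁ * y₁ = Hrc y₂ - deriv Hrc y₂ * y₂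

open Filter Real Set Topology

/-!
In the coordinate `x = Ψ⁻¹ y`, affine functions of `y` become solutions of `u'' = 2 α u`, so a
tangency pair amounts to such a solution having the Cauchy data of `h_l` at `x₁` and of `h_r` at
`x₂`. On `x ≤ f₀ + c` one has `h_r = h_l - 2 δ c (x - x_c)`. With `s = √(2 α)` and
`q = h_l'' - 2 α h_l`, variation of constants gives, over `[x₁, x₂]`,
`∫ cosh (s (x₂ - x)) q = 2 δ c` and
`∫ (s (x₂ - x₁) cosh (s (x₂ - x)) - sinh (s (x₂ - x))) q = 2 δ c s (x_c - x₁)`.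
If `x₁ ≥ x₀ = 1 / (2 δ)`, then for small `c` the first identity forces `x₂ - x₁ ≈ 2 δ c / q x₀` and
the second `x_c - x₁ ≈ (x₂ - x₁) / 2`. Since `q x₀ < 2 δ`, this exceeds `c / 2 = x_c - x₀`, a
contradiction. If `x₂ ≥ f₀ + c`, the slope of `H_r` at `Ψ x₂` is at least `-O(c)`, whereas the slope
of `H_l` near `Ψ x₀`, where `x₀ < f₀`, is bounded above by a negative constant.
-/

theorem sinh_le_mul_cosh {z : ℝ} (hz : 0 ≤ z) : sinh z ≤ z * cosh z := by
  have h := (convex_Icc 0 z).image_sub_le_mul_sub_of_deriv_le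
    continuous_sinh.continuousOn differentiable_sinh.differentiableOn (C := cosh z)
    (fun x hx => by
      rw [interior_Icc] at hx
      rw [Real.deriv_sinh, cosh_le_cosh, abs_of_pos hx.1, abs_of_nonneg hz]
      exact hx.2.le)
    0 (left_mem_Icc.2 hz) z (right_mem_Icc.2 hz) hz
  rwa [sinh_zero, sub_zero, sub_zero, mul_comm] at h

theorem hasDerivAt_ite_le {f g : ℝ → ℝ} {k x d : ℝ} (hfg : f k = g k)
    (hf : x ≤ k → HasDerivAt f d x) (hg : k ≤ x → HasDerivAt g d x) :
    HasDerivAt (fun t => if t ≤ k then f t else g t) d x := by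
  have eqf : EqOn (fun t => if t ≤ k then f t else g t) f (Iic k) := fun t ht => if_pos ht
  have eqg : EqOn (fun t => if t ≤ k then f t else g t) g (Ici k) := by
    rintro t (ht : k ≤ t)
    rcases ht.eq_or_lt with rfl | ht
    · exact (if_pos le_rfl).trans hfg
    · exact if_neg ht.not_ge
  rcases lt_trichotomy x k with hx | rfl | hx
  · exact (hf hx.le).congr_of_eventuallyEq (eqf.eventuallyEq_of_mem (Iic_mem_nhds hx))
  · rw [← hasDerivWithinAt_univ, ← Iic_union_Ici (a := x)]
    exact ((hf le_rfl).hasDerivWithinAt.congr eqf (eqf self_mem_Iic)).union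
      ((hg le_rfl).hasDerivWithinAt.congr eqg (eqg self_mem_Ici))
  · exact (hg hx.le).congr_of_eventuallyEq (eqg.eventuallyEq_of_mem (Ici_mem_nhds hx))

/-- The Dayanik–Karatzas transform `(h / φ) ∘ (ψ / φ)⁻¹` of `h`, where `ψ x = exp (s * x)` and
`φ x = exp (-s * x)` are the fundamental solutions of `u'' = s ^ 2 * u`. It turns solutions of that
equation into affine functions of `y = exp (2 * s * x)`. -/
noncomputable def dkTransform (s : ℝ) (h : ℝ → ℝ) (y : ℝ) : ℝ :=
  √y * h (log y / (2 * s))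

/-- The tangency system for the transforms of `f` and `g`, with the tangency points expressed in the
coordinate `x`. -/
def DKTangency (s : ℝ) (f g : ℝ → ℝ) (x₁ x₂ : ℝ) : Prop :=
  TangencySystem (dkTransform s f) (dkTransform s g) (exp (2 * s * x₁)) (exp (2 * s * x₂))

section DKTransform

variable {s x x₁ x₂ f' g' : ℝ} {f g : ℝ → ℝ}

theorem sqrt_exp_two_mul (s x : ℝ) : √(exp (2 * s * x)) = exp (s * x) := by
  rw [mul_assoc, two_mul, exp_add, sqrt_mul_self (exp_pos _).le]

theorem log_exp_two_mul_div (hs : s ≠ 0) (x : ℝ) : log (exp (2 * s * x)) / (2 * s) = x := by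
  rw [log_exp, mul_div_cancel_left₀ _ (mul_ne_zero two_ne_zero hs)]

theorem exists_exp_two_mul_eq {y : ℝ} (hs : s ≠ 0) (hy : 0 < y) : ∃ x, exp (2 * s * x) = y :=
  ⟨log y / (2 * s), by rw [mul_div_cancel₀ _ (mul_ne_zero two_ne_zero hs), exp_log hy]⟩

theorem dkTransform_exp (hs : s ≠ 0) (h : ℝ → ℝ) (x : ℝ) :
    dkTransform s h (exp (2 * s * x)) = exp (s * x) * h x := by
  rw [dkTransform, sqrt_exp_two_mul, log_exp_two_mul_div hs]

theorem hasDerivAt_dkTransform (hs : s ≠ 0) (hf : HasDerivAt f f' x) :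
    HasDerivAt (dkTransform s f) (exp (-s * x) * (s * f x + f') / (2 * s)) (exp (2 * s * x)) := by
  have hy : exp (2 * s * x) ≠ 0 := (exp_pos _).ne'
  have hf : HasDerivAt f f' (log (exp (2 * s * x)) / (2 * s)) := by
    rwa [log_exp_two_mul_div hs]
  refine ((hasDerivAt_sqrt hy).mul
    (hf.comp (exp (2 * s * x)) ((hasDerivAt_log hy).div_const (2 * s)))).congr_deriv ?_
  rw [Function.comp_apply, log_exp_two_mul_div hs, sqrt_exp_two_mul, neg_mul, exp_neg,
    show 2 * s * x = s * x + s * x by ring, exp_add]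
  field_simp

theorem TangencySystem.congr {H₁ H₂ G₁ G₂ : ℝ → ℝ} {y₁ y₂ : ℝ} (h₁ : EqOn H₁ G₁ (Ioi 0))
    (h₂ : EqOn H₂ G₂ (Ioi 0)) (hy₁ : 0 < y₁) (hy₂ : 0 < y₂) (T : TangencySystem H₁ H₂ y₁ y₂) :
    TangencySystem G₁ G₂ y₁ y₂ := by
  unfold TangencySystem at T ⊢
  rwa [← h₁ hy₁, ← h₂ hy₂, ← h₁.deriv isOpen_Ioi hy₁, ← h₂.deriv isOpen_Ioi hy₂]

namespace DKTangency

theorem slope_eq (hs : s ≠ 0)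
    (T : DKTangency s f g x₁ x₂)
    (hf : HasDerivAt f f' x₁) (hg : HasDerivAt g g' x₂) :
    exp (-s * x₁) * (s * f x₁ + f') = exp (-s * x₂) * (s * g x₂ + g') := by
  have h := T.1
  rwa [(hasDerivAt_dkTransform hs hf).deriv, (hasDerivAt_dkTransform hs hg).deriv,
    div_left_inj' (mul_ne_zero two_ne_zero hs)] at h

theorem intercept_eq (hs : s ≠ 0)
    (T : DKTangency s f g x₁ x₂)
    (hf : HasDerivAt f f' x₁) (hg : HasDerivAt g g' x₂) :
    exp (s * x₁) * (s * f x₁ - f') = exp (s * x₂) * (s * g x₂ - g') := by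
  have intercept (h : ℝ → ℝ) (h' x : ℝ) :
      exp (s * x) * h x - exp (-s * x) * (s * h x + h') / (2 * s) * exp (2 * s * x) =
        exp (s * x) * (s * h x - h') / (2 * s) := by
    rw [show 2 * s * x = s * x + s * x by ring, exp_add, neg_mul, exp_neg]
    field_simp
    ring
  have h := T.2
  rwa [(hasDerivAt_dkTransform hs hf).deriv, (hasDerivAt_dkTransform hs hg).deriv,
    dkTransform_exp hs, dkTransform_exp hs, intercept, intercept,
    div_left_inj' (mul_ne_zero two_ne_zero hs)] at h

/- The common tangent line is the transform of the solution of `u'' = s ^ 2 * u` with the Cauchy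
data of `f` at `x₁`; this solution must have the Cauchy data of `g` at `x₂`. -/
theorem cauchyData_eq (hs : s ≠ 0)
    (T : DKTangency s f g x₁ x₂)
    (hf : HasDerivAt f f' x₁) (hg : HasDerivAt g g' x₂) :
    s * cosh (s * (x₂ - x₁)) * f x₁ + sinh (s * (x₂ - x₁)) * f' = s * g x₂ ∧
      s * sinh (s * (x₂ - x₁)) * f x₁ + cosh (s * (x₂ - x₁)) * f' = g' := by
  have slope := T.slope_eq hs hf hg
  have intercept := T.intercept_eq hs hf hg
  rw [neg_mul, neg_mul, exp_neg, exp_neg] at slope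
  rw [cosh_eq, sinh_eq, mul_sub, neg_sub, exp_sub, exp_sub]
  field_simp at slope ⊢
  constructor
  · linear_combination exp (s * x₂) * slope + exp (s * x₁) * intercept
  · linear_combination exp (s * x₂) * slope - exp (s * x₁) * intercept

end DKTangency

end DKTransform

section VariationOfConstants

variable {s : ℝ} {f f' q : ℝ → ℝ}

theorem integral_cosh_mul (hf : ∀ x, HasDerivAt f (f' x) x)
    (hf' : ∀ x, HasDerivAt f' (s ^ 2 * f x + q x) x) (hq : Continuous q) (x₁ x₂ : ℝ) :
    ∫ x in x₁..x₂, cosh (s * (x₂ - x)) * q x =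
      f' x₂ - (s * sinh (s * (x₂ - x₁)) * f x₁ + cosh (s * (x₂ - x₁)) * f' x₁) := by
  have hd (x : ℝ) : HasDerivAt
      (fun x => s * sinh (s * (x₂ - x)) * f x + cosh (s * (x₂ - x)) * f' x)
      (cosh (s * (x₂ - x)) * q x) x := by
    have hlin := ((hasDerivAt_id' x).const_sub x₂).const_mul s
    refine (((hlin.sinh.const_mul s).mul (hf x)).add (hlin.cosh.mul (hf' x))).congr_deriv ?_
    ring
  rw [intervalIntegral.integral_eq_sub_of_hasDerivAt (fun x _ => hd x)
    (Continuous.intervalIntegrable (by fun_prop) _ _)]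
  simp only [sub_self, mul_zero, sinh_zero, cosh_zero, zero_mul, one_mul, zero_add]

theorem integral_sinh_mul (hf : ∀ x, HasDerivAt f (f' x) x)
    (hf' : ∀ x, HasDerivAt f' (s ^ 2 * f x + q x) x) (hq : Continuous q) (x₁ x₂ : ℝ) :
    ∫ x in x₁..x₂, sinh (s * (x₂ - x)) * q x =
      s * f x₂ - (s * cosh (s * (x₂ - x₁)) * f x₁ + sinh (s * (x₂ - x₁)) * f' x₁) := by
  have hd (x : ℝ) : HasDerivAt
      (fun x => s * cosh (s * (x₂ - x)) * f x + sinh (s * (x₂ - x)) * f' x)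
      (sinh (s * (x₂ - x)) * q x) x := by
    have hlin := ((hasDerivAt_id' x).const_sub x₂).const_mul s
    refine (((hlin.cosh.const_mul s).mul (hf x)).add (hlin.sinh.mul (hf' x))).congr_deriv ?_
    ring
  rw [intervalIntegral.integral_eq_sub_of_hasDerivAt (fun x _ => hd x)
    (Continuous.intervalIntegrable (by fun_prop) _ _)]
  simp only [sub_self, mul_zero, sinh_zero, cosh_zero, mul_one, zero_mul, add_zero]

end VariationOfConstants

section WeightedIntegrals

variable {s x₁ x₂ : ℝ} {q : ℝ → ℝ}

theorem mul_sub_le_integral_cosh_mul (hx : x₁ ≤ x₂) (hq : Continuous q)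
    (hanti : AntitoneOn q (Icc x₁ x₂)) (hpos : 0 ≤ q x₂) :
    q x₂ * (x₂ - x₁) ≤ ∫ x in x₁..x₂, cosh (s * (x₂ - x)) * q x := by
  calc q x₂ * (x₂ - x₁) = ∫ _ in x₁..x₂, q x₂ := by
        rw [intervalIntegral.integral_const, smul_eq_mul, mul_comm]
    _ ≤ _ := intervalIntegral.integral_mono_on hx intervalIntegrable_const
        (Continuous.intervalIntegrable (by fun_prop) _ _) fun x hx' => ?_
  have hqx : q x₂ ≤ q x := hanti hx' (right_mem_Icc.2 hx) hx'.2
  exact hqx.trans (le_mul_of_one_le_left (hpos.trans hqx) (one_le_cosh _))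

theorem integral_cosh_mul_le (hs : 0 ≤ s) (hx : x₁ ≤ x₂) (hq : Continuous q)
    (hanti : AntitoneOn q (Icc x₁ x₂)) (hpos : 0 ≤ q x₂) :
    ∫ x in x₁..x₂, cosh (s * (x₂ - x)) * q x ≤ q x₁ * cosh (s * (x₂ - x₁)) * (x₂ - x₁) := by
  calc _ ≤ ∫ _ in x₁..x₂, cosh (s * (x₂ - x₁)) * q x₁ :=
        intervalIntegral.integral_mono_on hx (Continuous.intervalIntegrable (by fun_prop) _ _)
          intervalIntegrable_const fun x hx' => ?_
    _ = q x₁ * cosh (s * (x₂ - x₁)) * (x₂ - x₁) := by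
        rw [intervalIntegral.integral_const, smul_eq_mul]; ring
  have hcosh : cosh (s * (x₂ - x)) ≤ cosh (s * (x₂ - x₁)) := by
    rw [cosh_le_cosh, abs_of_nonneg (mul_nonneg hs (sub_nonneg.2 hx'.2)),
      abs_of_nonneg (mul_nonneg hs (sub_nonneg.2 hx))]
    gcongr
    exact hx'.1
  have hqx : 0 ≤ q x := hpos.trans (hanti hx' (right_mem_Icc.2 hx) hx'.2)
  exact mul_le_mul hcosh (hanti (left_mem_Icc.2 hx) hx' hx'.1) hqx (cosh_pos _).le

theorem mul_sq_sub_le_integral_cosh_sub_sinh_mul (hs : 0 ≤ s) (hx : x₁ ≤ x₂) (hq : Continuous q)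
    (hanti : AntitoneOn q (Icc x₁ x₂)) (hpos : 0 ≤ q x₂) :
    s * q x₂ * ((x₂ - x₁) ^ 2 / 2) ≤
      ∫ x in x₁..x₂, (s * (x₂ - x₁) * cosh (s * (x₂ - x)) - sinh (s * (x₂ - x))) * q x := by
  have hweight {x : ℝ} (hx' : x ∈ Icc x₁ x₂) :
      s * (x - x₁) ≤ s * (x₂ - x₁) * cosh (s * (x₂ - x)) - sinh (s * (x₂ - x)) := by
    have h₁ : s * (x - x₁) ≤ s * (x - x₁) * cosh (s * (x₂ - x)) :=
      le_mul_of_one_le_right (mul_nonneg hs (sub_nonneg.2 hx'.1)) (one_le_cosh _)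
    have h₂ := sinh_le_mul_cosh (mul_nonneg hs (sub_nonneg.2 hx'.2))
    linear_combination h₁ + h₂
  have hint : ∫ x in x₁..x₂, s * q x₂ * (x - x₁) = s * q x₂ * ((x₂ - x₁) ^ 2 / 2) := by
    rw [intervalIntegral.integral_const_mul,
      intervalIntegral.integral_comp_sub_right (fun x => x), integral_id]
    ring
  rw [← hint]
  refine intervalIntegral.integral_mono_on hx (Continuous.intervalIntegrable (by fun_prop) _ _)
    (Continuous.intervalIntegrable (by fun_prop) _ _) fun x hx' => ?_
  have hnonneg : 0 ≤ s * (x - x₁) := mul_nonneg hs (sub_nonneg.2 hx'.1)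
  calc s * q x₂ * (x - x₁) = s * (x - x₁) * q x₂ := by ring
    _ ≤ _ := mul_le_mul (hweight hx') (hanti hx' (right_mem_Icc.2 hx) hx'.2) hpos
        (hnonneg.trans (hweight hx'))

end WeightedIntegrals

namespace DKTangency

variable {s x₁ x₂ κ m N : ℝ} {f f' q g : ℝ → ℝ}

theorem integral_cosh_mul (hs : s ≠ 0) (hf : ∀ x, HasDerivAt f (f' x) x)
    (hf' : ∀ x, HasDerivAt f' (s ^ 2 * f x + q x) x) (hq : Continuous q)
    (hg : HasDerivAt g (f' x₂ - κ) x₂)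
    (T : DKTangency s f g x₁ x₂) :
    ∫ x in x₁..x₂, cosh (s * (x₂ - x)) * q x = κ := by
  rw [_root_.integral_cosh_mul hf hf' hq, (T.cauchyData_eq hs (hf x₁) hg).2, sub_sub_cancel]

theorem integral_cosh_sub_sinh_mul (hs : s ≠ 0) (hf : ∀ x, HasDerivAt f (f' x) x)
    (hf' : ∀ x, HasDerivAt f' (s ^ 2 * f x + q x) x) (hq : Continuous q)
    (hg₀ : g x₂ = f x₂ - κ * (x₂ - m)) (hg : HasDerivAt g (f' x₂ - κ) x₂)
    (T : DKTangency s f g x₁ x₂) :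
    ∫ x in x₁..x₂, (s * (x₂ - x₁) * cosh (s * (x₂ - x)) - sinh (s * (x₂ - x))) * q x =
      s * κ * (m - x₁) := by
  simp only [sub_mul, mul_assoc (s * (x₂ - x₁))]
  rw [intervalIntegral.integral_sub (Continuous.intervalIntegrable (by fun_prop) _ _)
      (Continuous.intervalIntegrable (by fun_prop) _ _), intervalIntegral.integral_const_mul,
    T.integral_cosh_mul hs hf hf' hq hg, integral_sinh_mul hf hf' hq,
    (T.cauchyData_eq hs (hf x₁) hg).1, hg₀]
  ring

theorem mul_sub_le (hs : 0 < s) (hx : x₁ < x₂) (hf : ∀ x, HasDerivAt f (f' x) x)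
    (hf' : ∀ x, HasDerivAt f' (s ^ 2 * f x + q x) x) (hq : Continuous q)
    (hanti : AntitoneOn q (Icc x₁ x₂)) (hpos : 0 < q x₂)
    (hg : HasDerivAt g (f' x₂ - κ) x₂)
    (T : DKTangency s f g x₁ x₂) :
    q x₂ * (x₂ - x₁) ≤ κ :=
  (mul_sub_le_integral_cosh_mul hx.le hq hanti hpos.le).trans_eq
    (T.integral_cosh_mul hs.ne' hf hf' hq hg)

theorem lt_two_mul_sub (hs : 0 < s) (hx : x₁ < x₂) (hf : ∀ x, HasDerivAt f (f' x) x)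
    (hf' : ∀ x, HasDerivAt f' (s ^ 2 * f x + q x) x) (hq : Continuous q)
    (hanti : AntitoneOn q (Icc x₁ x₂)) (hpos : 0 < q x₂)
    (hN : (q x₁ * cosh (s * (x₂ - x₁))) ^ 2 < N * q x₂)
    (hg₀ : g x₂ = f x₂ - κ * (x₂ - m)) (hg : HasDerivAt g (f' x₂ - κ) x₂)
    (T : DKTangency s f g x₁ x₂) :
    κ < 2 * N * (m - x₁) := by
  have hu : 0 < x₂ - x₁ := sub_pos.2 hx
  have hκ : 0 < κ := (mul_pos hpos hu).trans_le (T.mul_sub_le hs hx hf hf' hq hanti hpos hg)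
  have hNpos : 0 < N := pos_of_mul_pos_left ((sq_nonneg _).trans_lt hN) hpos.le
  have upper : κ ≤ q x₁ * cosh (s * (x₂ - x₁)) * (x₂ - x₁) :=
    (T.integral_cosh_mul hs.ne' hf hf' hq hg).symm.trans_le
      (integral_cosh_mul_le hs.le hx.le hq hanti hpos.le)
  have lower : q x₂ * ((x₂ - x₁) ^ 2 / 2) ≤ κ * (m - x₁) := by
    have h := (mul_sq_sub_le_integral_cosh_sub_sinh_mul hs.le hx.le hq hanti hpos.le).trans_eq
      (T.integral_cosh_sub_sinh_mul hs.ne' hf hf' hq hg₀ hg)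
    rw [mul_assoc, mul_assoc] at h
    exact le_of_mul_le_mul_left h hs
  refine lt_of_mul_lt_mul_left ?_ hκ.le
  calc κ * κ = κ ^ 2 := (sq κ).symm
    _ ≤ (q x₁ * cosh (s * (x₂ - x₁)) * (x₂ - x₁)) ^ 2 := by gcongr
    _ = (q x₁ * cosh (s * (x₂ - x₁))) ^ 2 * (x₂ - x₁) ^ 2 := mul_pow _ _ _
    _ < N * q x₂ * (x₂ - x₁) ^ 2 := by gcongr
    _ = 2 * N * (q x₂ * ((x₂ - x₁) ^ 2 / 2)) := by ring
    _ ≤ 2 * N * (κ * (m - x₁)) := by gcongr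
    _ = κ * (2 * N * (m - x₁)) := by ring

theorem eventually_lt {x₀ M : ℝ} (hs : 0 < s) (hf : ∀ x, HasDerivAt f (f' x) x)
    (hf' : ∀ x, HasDerivAt f' (s ^ 2 * f x + q x) x) (hq : Continuous q)
    (hanti : AntitoneOn q (Ici x₀)) (hM : x₀ ≤ M) (hpos : 0 < q M) (hN : q x₀ < N) :
    ∀ᶠ c in 𝓝[>] 0, ∀ (g : ℝ → ℝ) (x₁ x₂ : ℝ), x₁ < x₀ + c / 2 → x₀ + c / 2 < x₂ → x₂ ≤ M →
      g x₂ = f x₂ - N * c * (x₂ - (x₀ + c / 2)) → HasDerivAt g (f' x₂ - N * c) x₂ →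
      DKTangency s f g x₁ x₂ →
      x₁ < x₀ := by
  have hpos₀ : 0 < q x₀ := hpos.trans_le (hanti self_mem_Ici hM hM)
  have hnear : ∀ᶠ p : ℝ × ℝ in 𝓝 (x₀, x₀),
      (q p.1 * cosh (s * (p.2 - p.1))) ^ 2 < N * q p.2 := by
    refine ContinuousAt.eventually_lt (by fun_prop) (by fun_prop) ?_
    rw [sub_self, mul_zero, cosh_zero, mul_one, sq]
    exact mul_lt_mul_of_pos_right hN hpos₀
  obtain ⟨ε, hε, hball⟩ := Metric.eventually_nhds_iff.1 hnear
  have hsmall : ∀ᶠ c : ℝ in 𝓝[>] 0, c / 2 + N * c / q M < ε := by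
    have hcont : Continuous fun c : ℝ => c / 2 + N * c / q M := by fun_prop
    exact (hcont.continuousAt.eventually_lt_const (by simpa using hε)).filter_mono
      nhdsWithin_le_nhds
  filter_upwards [hsmall] with c hcε g x₁ x₂ hx₁ hx₂ hx₂M hg₀ hg T
  by_contra! hx₀
  have hx : x₁ < x₂ := hx₁.trans hx₂
  have hanti' : AntitoneOn q (Icc x₁ x₂) := hanti.mono fun x hx' => hx₀.trans hx'.1
  have hq₂ : q M ≤ q x₂ := hanti (hx₀.trans hx.le) hM hx₂M
  have hpos₂ : 0 < q x₂ := hpos.trans_le hq₂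
  have hclose : x₂ - x₁ ≤ N * c / q M := by
    rw [le_div_iff₀' hpos]
    exact (mul_le_mul_of_nonneg_right hq₂ (sub_nonneg.2 hx.le)).trans
      (T.mul_sub_le hs hx hf hf' hq hanti' hpos₂ hg)
  have hdist : dist (x₁, x₂) (x₀, x₀) < ε := by
    rw [Prod.dist_eq, dist_eq, dist_eq, abs_of_nonneg (by linarith), abs_of_nonneg (by linarith)]
    exact max_lt (by linarith) (by linarith)
  have hlt := T.lt_two_mul_sub hs hx hf hf' hq hanti' hpos₂ (hball hdist) hg₀ hg
  have : N * x₁ < N * x₀ := by linarith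
  exact hx₀.not_gt (lt_of_mul_lt_mul_left this (hpos₀.trans hN).le)

end DKTangency

section Payoffs

variable (α δ lam f₀ c : ℝ)

/-- The payoff `h_l` behind `H_l`, in the coordinate `x = Ψ⁻¹ y`. -/
noncomputable def leftPayoff (x : ℝ) : ℝ :=
  (δ - lam / α) * x ^ 2 - lam / α ^ 2

/-- The source term of the equation `h_l'' = 2 * α * h_l + leftSource` solved by the left payoff. -/
def leftSource (x : ℝ) : ℝ :=
  2 * δ - 2 * (α * δ - lam) * x ^ 2

/-- The branch `h_{r1}` of the right payoff, used on `x ≤ f₀ + c`. -/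
noncomputable def rightPayoffInner (x : ℝ) : ℝ :=
  δ * c * (c - 2 * x) + (δ - lam / α) * x ^ 2 + c - lam / α ^ 2

/-- The branch `h_{r2}` of the right payoff, used on `f₀ + c ≤ x`, with `B₀` written out. -/
noncomputable def rightPayoffOuter (x : ℝ) : ℝ :=
  lam / α * c * (c - 2 * x) + c + -(2 * f₀ / (α * √(2 * α))) * (α * δ - lam) *
    exp (f₀ * √(2 * α)) * exp (-(x - c) * √(2 * α))

/-- The right payoff `h_r`. -/
noncomputable def rightPayoff (x : ℝ) : ℝ :=
  if x ≤ f₀ + c then rightPayoffInner α δ lam c x else rightPayoffOuter α δ lam f₀ c x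

/-- The transform of the left payoff is stationary at `f₀`. This is what makes the two branches
of the right payoff fit smoothly at `f₀ + c`. -/
def IsFreeBoundary : Prop :=
  √(2 * α) * leftPayoff α δ lam f₀ + 2 * (δ - lam / α) * f₀ = 0

variable {α δ lam f₀ c}

theorem hasDerivAt_leftPayoff (x : ℝ) :
    HasDerivAt (leftPayoff α δ lam) (2 * (δ - lam / α) * x) x :=
  (((hasDerivAt_pow 2 x).const_mul (δ - lam / α)).sub_const (lam / α ^ 2)).congr_deriv
    (by push_cast; ring)

theorem hasDerivAt_deriv_leftPayoff (hα : 0 < α) (x : ℝ) :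
    HasDerivAt (fun x => 2 * (δ - lam / α) * x)
      (√(2 * α) ^ 2 * leftPayoff α δ lam x + leftSource α δ lam x) x := by
  refine ((hasDerivAt_id' x).const_mul (2 * (δ - lam / α))).congr_deriv ?_
  rw [sq_sqrt (by positivity), leftPayoff, leftSource]
  field_simp
  ring

theorem continuous_leftSource : Continuous (leftSource α δ lam) := by
  unfold leftSource
  fun_prop

theorem antitoneOn_leftSource (h : lam ≤ α * δ) : AntitoneOn (leftSource α δ lam) (Ici 0) := by
  intro x hx y _ hxy
  have : 0 ≤ α * δ - lam := sub_nonneg.2 h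
  have : 0 ≤ x := hx
  unfold leftSource
  gcongr

theorem rightPayoffInner_eq (hδ : δ ≠ 0) (x : ℝ) :
    rightPayoffInner α δ lam c x =
      leftPayoff α δ lam x - 2 * δ * c * (x - (1 / (2 * δ) + c / 2)) := by
  rw [rightPayoffInner, leftPayoff]
  field_simp
  ring

theorem hasDerivAt_rightPayoffInner (hδ : δ ≠ 0) (x : ℝ) :
    HasDerivAt (rightPayoffInner α δ lam c) (2 * (δ - lam / α) * x - 2 * δ * c) x := by
  rw [funext (rightPayoffInner_eq hδ)]
  exact ((hasDerivAt_leftPayoff x).sub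
    (((hasDerivAt_id' x).sub_const (1 / (2 * δ) + c / 2)).const_mul (2 * δ * c))).congr_deriv
    (by rw [mul_one])

theorem hasDerivAt_rightPayoffOuter (x : ℝ) :
    HasDerivAt (rightPayoffOuter α δ lam f₀ c)
      (-(2 * (lam / α) * c) - √(2 * α) *
        (rightPayoffOuter α δ lam f₀ c x - (lam / α * c * (c - 2 * x) + c))) x := by
  have hlin := (((hasDerivAt_id' x).const_mul 2).const_sub c).const_mul (lam / α * c)
  have hexp := (((hasDerivAt_id' x).sub_const c).fun_neg.mul_const √(2 * α)).exp
  refine ((hlin.add_const c).add (hexp.const_mul _)).congr_deriv ?_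
  rw [rightPayoffOuter]
  ring

theorem rightPayoffOuter_boundary (hα : 0 < α) :
    rightPayoffOuter α δ lam f₀ c (f₀ + c) =
      lam / α * c * (c - 2 * (f₀ + c)) + c - 2 * (δ - lam / α) * f₀ / √(2 * α) := by
  have hexp : exp (f₀ * √(2 * α)) * exp (-(f₀ + c - c) * √(2 * α)) = 1 := by
    rw [← exp_add, ← exp_zero]
    ring_nf
  have : 0 < √(2 * α) := by positivity
  rw [rightPayoffOuter, mul_assoc _ (exp _), hexp]
  field_simp
  ring

theorem isFreeBoundary (hα : 0 < α) (hlam : 0 < lam) (hltd : lam < α * δ)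
    (hf₀ : f₀ = 1 / √(2 * α) * (√((α * δ + lam) / (α * δ - lam)) - 1)) :
    IsFreeBoundary α δ lam f₀ := by
  have hs₀ : 0 < √(2 * α) := by positivity
  have hs₂ : √(2 * α) ^ 2 = 2 * α := sq_sqrt (by positivity)
  set s := √(2 * α)
  have hgap : 0 < α * δ - lam := sub_pos.2 hltd
  have hroot : (s * f₀ + 1) ^ 2 * (α * δ - lam) = α * δ + lam := by
    have : s * f₀ + 1 = √((α * δ + lam) / (α * δ - lam)) := by
      rw [hf₀]; field_simp; ring
    rw [this, sq_sqrt (div_nonneg (by linarith) hgap.le), div_mul_cancel₀ _ hgap.ne']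
  have hquad : s * (α * (α * δ - lam) * f₀ ^ 2 - lam) + 2 * α * (α * δ - lam) * f₀ = 0 := by
    refine (mul_eq_zero.1 ?_).resolve_left hs₀.ne'
    linear_combination α * hroot + (-lam) * hs₂
  rw [IsFreeBoundary, leftPayoff]
  field_simp
  linear_combination hquad

theorem leftSource_pos (hα : 0 < α) (hltd : lam < α * δ) (hf₀pos : 0 < f₀)
    (hf₀ : IsFreeBoundary α δ lam f₀) :
    0 < leftSource α δ lam f₀ := by
  have hs₂ : √(2 * α) ^ 2 = 2 * α := sq_sqrt (by positivity)
  have hgap : 0 < δ - lam / α := sub_pos.2 ((div_lt_iff₀' hα).2 hltd)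
  have heq : leftSource α δ lam f₀ = 2 * (δ - lam / α) * (1 + √(2 * α) * f₀) := by
    have h : 2 * α * leftPayoff α δ lam f₀ + 2 * (δ - lam / α) * √(2 * α) * f₀ = 0 := by
      rw [IsFreeBoundary] at hf₀
      linear_combination √(2 * α) * hf₀ - leftPayoff α δ lam f₀ * hs₂
    rw [leftPayoff] at h
    rw [leftSource]
    field_simp at h ⊢
    linear_combination -h / 2
  rw [heq]
  positivity

theorem leftPayoff_slope_neg {x : ℝ} (hα : 0 < α) (hltd : lam < α * δ) (hx : 0 ≤ x) (hxf : x < f₀)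
    (hf₀ : IsFreeBoundary α δ lam f₀) :
    √(2 * α) * leftPayoff α δ lam x + 2 * (δ - lam / α) * x < 0 := by
  have hgap : 0 < δ - lam / α := sub_pos.2 ((div_lt_iff₀' hα).2 hltd)
  rw [IsFreeBoundary] at hf₀
  rw [← hf₀]
  unfold leftPayoff
  gcongr

theorem rightPayoffInner_boundary (hα : 0 < α)
    (hf₀ : IsFreeBoundary α δ lam f₀) :
    rightPayoffInner α δ lam c (f₀ + c) =
      lam / α * c * (c - 2 * (f₀ + c)) + c - 2 * (δ - lam / α) * f₀ / √(2 * α) := by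
  have hs : √(2 * α) ≠ 0 := by positivity
  have hleft : leftPayoff α δ lam f₀ = -(2 * (δ - lam / α) * f₀ / √(2 * α)) := by
    rw [← neg_div, eq_div_iff hs]
    rw [IsFreeBoundary] at hf₀
    linear_combination hf₀
  rw [sub_eq_add_neg _ (_ / √(2 * α)), ← hleft, rightPayoffInner, leftPayoff]
  ring

theorem hasDerivAt_rightPayoffOuter_boundary (hα : 0 < α) :
    HasDerivAt (rightPayoffOuter α δ lam f₀ c)
      (2 * (δ - lam / α) * (f₀ + c) - 2 * δ * c) (f₀ + c) := by
  refine (hasDerivAt_rightPayoffOuter (f₀ + c)).congr_deriv ?_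
  have : 0 < √(2 * α) := by positivity
  rw [rightPayoffOuter_boundary hα, sub_right_comm, sub_self, zero_sub]
  field_simp
  ring

theorem hasDerivAt_rightPayoff_of_le {x : ℝ} (hα : 0 < α) (hδ : δ ≠ 0)
    (hf₀ : IsFreeBoundary α δ lam f₀) (hx : x ≤ f₀ + c) :
    HasDerivAt (rightPayoff α δ lam f₀ c) (2 * (δ - lam / α) * x - 2 * δ * c) x := by
  refine hasDerivAt_ite_le
    ((rightPayoffInner_boundary hα hf₀).trans (rightPayoffOuter_boundary hα).symm)
    (fun _ => hasDerivAt_rightPayoffInner hδ x) fun hx' => ?_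
  rw [hx.antisymm hx']
  exact hasDerivAt_rightPayoffOuter_boundary hα

theorem rightPayoff_of_ge {x : ℝ} (hα : 0 < α)
    (hf₀ : IsFreeBoundary α δ lam f₀) (hx : f₀ + c ≤ x) :
    rightPayoff α δ lam f₀ c x = rightPayoffOuter α δ lam f₀ c x := by
  rcases hx.eq_or_lt with rfl | hx
  · rw [rightPayoff, if_pos le_rfl, rightPayoffInner_boundary hα hf₀, rightPayoffOuter_boundary hα]
  · rw [rightPayoff, if_neg hx.not_ge]

theorem hasDerivAt_rightPayoff_of_ge {x : ℝ} (hα : 0 < α) (hδ : δ ≠ 0)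
    (hf₀ : IsFreeBoundary α δ lam f₀) (hx : f₀ + c ≤ x) :
    HasDerivAt (rightPayoff α δ lam f₀ c)
      (-(2 * (lam / α) * c) - √(2 * α) *
        (rightPayoff α δ lam f₀ c x - (lam / α * c * (c - 2 * x) + c))) x := by
  rw [rightPayoff_of_ge hα hf₀ hx]
  rcases hx.eq_or_lt with rfl | hx
  · rw [(hasDerivAt_rightPayoffOuter (f₀ + c)).unique (hasDerivAt_rightPayoffOuter_boundary hα)]
    exact hasDerivAt_rightPayoff_of_le hα hδ hf₀ le_rfl
  · exact hasDerivAt_ite_le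
      ((rightPayoffInner_boundary hα hf₀).trans (rightPayoffOuter_boundary hα).symm)
      (fun hx' => absurd hx' hx.not_ge) fun _ => hasDerivAt_rightPayoffOuter x

end Payoffs

theorem neg_le_exp_neg_mul_affine {s l c x : ℝ} (hs : 0 ≤ s) (hl : 0 ≤ l) (hc : 0 ≤ c) :
    -(2 * l * c) ≤ exp (-s * x) * (s * (l * c * (c - 2 * x) + c) - 2 * l * c) := by
  have hexp : exp (-s * x) * (s * x + 1) ≤ 1 := by
    calc exp (-s * x) * (s * x + 1) ≤ exp (-s * x) * exp (s * x) := by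
          gcongr; exact add_one_le_exp _
      _ = 1 := by rw [← exp_add, neg_mul, neg_add_cancel, exp_zero]
  calc -(2 * l * c) ≤ -(2 * l * c) * (exp (-s * x) * (s * x + 1)) := by
        rw [neg_mul, neg_le_neg_iff]
        exact mul_le_of_le_one_right (by positivity) hexp
    _ ≤ -(2 * l * c) * (exp (-s * x) * (s * x + 1)) + exp (-s * x) * (s * (l * c ^ 2 + c)) :=
        le_add_of_nonneg_right (by positivity)
    _ = _ := by ring

section Tangency

variable {α δ lam f₀ : ℝ}

theorem eventually_lt_of_tangency_inner (hα : 0 < α) (hδ : 0 < δ)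
    (hltd : lam < α * δ) (hf₀big : 1 / (2 * δ) < f₀)
    (hf₀ : IsFreeBoundary α δ lam f₀) :
    ∀ᶠ c in 𝓝[>] 0, ∀ x₁ x₂ : ℝ, x₁ < 1 / (2 * δ) + c / 2 → 1 / (2 * δ) + c / 2 < x₂ →
      x₂ ≤ f₀ + c →
      DKTangency √(2 * α) (leftPayoff α δ lam) (rightPayoff α δ lam f₀ c) x₁ x₂ →
      x₁ < 1 / (2 * δ) := by
  have hx₀ : 0 < 1 / (2 * δ) := by positivity
  obtain ⟨M, hMpos, hM⟩ : ∃ M, 0 < leftSource α δ lam M ∧ f₀ < M := by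
    have hnear : ∀ᶠ M in 𝓝[>] f₀, 0 < leftSource α δ lam M :=
      (continuous_leftSource.continuousAt.eventually_const_lt
        (leftSource_pos hα hltd (hx₀.trans hf₀big) hf₀)).filter_mono nhdsWithin_le_nhds
    exact (hnear.and self_mem_nhdsWithin).exists
  have hsource : leftSource α δ lam (1 / (2 * δ)) < 2 * δ :=
    sub_lt_self _ (mul_pos (mul_pos two_pos (sub_pos.2 hltd)) (by positivity))
  have hs : 0 < √(2 * α) := by positivity
  filter_upwards [DKTangency.eventually_lt hs hasDerivAt_leftPayoff
      (hasDerivAt_deriv_leftPayoff hα) continuous_leftSource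
      ((antitoneOn_leftSource hltd.le).mono (Ici_subset_Ici.2 hx₀.le)) (hf₀big.trans hM).le hMpos
      hsource, Ioo_mem_nhdsGT (sub_pos.2 hM)] with c hc hcM x₁ x₂ hx₁ hx₂ hx₂f T
  refine hc _ x₁ x₂ hx₁ hx₂ (by linarith [hcM.2]) ?_
    (hasDerivAt_rightPayoff_of_le hα hδ.ne' hf₀ hx₂f) T
  rw [rightPayoff, if_pos hx₂f, rightPayoffInner_eq hδ.ne']

theorem eventually_lt_of_tangency_outer (hα : 0 < α) (hδ : 0 < δ) (hlam : 0 < lam)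
    (hltd : lam < α * δ) (hf₀big : 1 / (2 * δ) < f₀)
    (hf₀ : IsFreeBoundary α δ lam f₀) :
    ∀ᶠ c in 𝓝[>] 0, ∀ x₁ x₂ : ℝ, x₁ < 1 / (2 * δ) + c / 2 → f₀ + c ≤ x₂ →
      DKTangency √(2 * α) (leftPayoff α δ lam) (rightPayoff α δ lam f₀ c) x₁ x₂ →
      x₁ < 1 / (2 * δ) := by
  have hs : 0 < √(2 * α) := by positivity
  have hnear : ∀ᶠ p : ℝ × ℝ in 𝓝 (0, 1 / (2 * δ)),
      exp (-√(2 * α) * p.2) *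
        (√(2 * α) * leftPayoff α δ lam p.2 + 2 * (δ - lam / α) * p.2) <
        -(2 * (lam / α) * p.1) := by
    unfold leftPayoff
    refine ContinuousAt.eventually_lt (by fun_prop) (by fun_prop) ?_
    rw [mul_zero, neg_zero]
    exact mul_neg_of_pos_of_neg (exp_pos _)
      (leftPayoff_slope_neg hα hltd (by positivity) hf₀big hf₀)
  obtain ⟨ε, hε, hball⟩ := Metric.eventually_nhds_iff.1 hnear
  filter_upwards [Ioo_mem_nhdsGT hε] with c ⟨hc, hcε⟩ x₁ x₂ hx₁ hx₂f T
  by_contra! hx₀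
  have hdist : dist (c, x₁) (0, 1 / (2 * δ)) < ε := by
    rw [Prod.dist_eq, dist_eq, dist_eq, abs_of_nonneg (by linarith), abs_of_nonneg (by linarith)]
    exact max_lt (by linarith) (by linarith)
  have slope := T.slope_eq hs.ne' (hasDerivAt_leftPayoff x₁)
    (hasDerivAt_rightPayoff_of_ge hα hδ.ne' hf₀ hx₂f)
  have hright := neg_le_exp_neg_mul_affine (s := √(2 * α)) (l := lam / α) (x := x₂) hs.le
    (by positivity) hc.le
  refine (hball hdist).not_ge (hright.trans_eq ?_)
  rw [slope]
  ring

theorem eventually_lt_of_tangency (hα : 0 < α) (hδ : 0 < δ) (hlam : 0 < lam)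
    (hltd : lam < α * δ) (hf₀big : 1 / (2 * δ) < f₀)
    (hf₀ : IsFreeBoundary α δ lam f₀) :
    ∀ᶠ c in 𝓝[>] 0, ∀ x₁ x₂ : ℝ, x₁ < 1 / (2 * δ) + c / 2 → 1 / (2 * δ) + c / 2 < x₂ →
      DKTangency √(2 * α) (leftPayoff α δ lam) (rightPayoff α δ lam f₀ c) x₁ x₂ →
      x₁ < 1 / (2 * δ) := by
  filter_upwards [eventually_lt_of_tangency_inner hα hδ hltd hf₀big hf₀,
    eventually_lt_of_tangency_outer hα hδ hlam hltd hf₀big hf₀] with c inner outer x₁ x₂ hx₁ hx₂ T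
  rcases le_total x₂ (f₀ + c) with hx₂f | hx₂f
  · exact inner x₁ x₂ hx₁ hx₂ hx₂f T
  · exact outer x₁ x₂ hx₁ hx₂f T

end Tangency

theorem stmt_16_general (α δ lam : ℝ) (hα : 0 < α) (hδ : 0 < δ) (hlam : 0 < lam)
    (hltd : lam < α * δ)
    (f₀ : ℝ)
    (hf₀ : f₀ = (1 / Real.sqrt (2 * α)) * (Real.sqrt ((α * δ + lam) / (α * δ - lam)) - 1))
    (hf₀big : 1 / (2 * δ) < f₀)
    (Ψ : ℝ → ℝ) (hΨ : ∀ x, Ψ x = Real.exp (2 * Real.sqrt (2 * α) * x))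
    (Hl : ℝ → ℝ)
    (hHl : ∀ y, 0 < y → Hl y = Real.sqrt y *
      (-(lam / α ^ 2) + ((δ - lam / α) / (8 * α)) * (Real.log y) ^ 2))
    (B₀ : ℝ)
    (hB₀ : B₀ = -(2 * f₀ / (α * Real.sqrt (2 * α))) * (α * δ - lam) *
      Real.exp (f₀ * Real.sqrt (2 * α)))
    (hr1 hr2 hr Hr : ℝ → ℝ → ℝ)
    (hhr1 : ∀ c x, hr1 c x = δ * c * (c - 2 * x) + (δ - lam / α) * x ^ 2 + c - lam / α ^ 2)
    (hhr2 : ∀ c x, hr2 c x = (lam / α) * c * (c - 2 * x) + c +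
      B₀ * Real.exp (-(x - c) * Real.sqrt (2 * α)))
    (hhra : ∀ c x, x ≤ f₀ + c → hr c x = hr1 c x)
    (hhrb : ∀ c x, f₀ + c ≤ x → hr c x = hr2 c x)
    (hHr : ∀ c y, 0 < y → Hr c y = Real.sqrt y * hr c (Real.log y / (2 * Real.sqrt (2 * α)))) :
    ∃ cbar > (0 : ℝ), ∀ c, 0 < c → c < cbar → ∀ y₁ y₂ : ℝ,
      0 < y₁ → y₁ < Ψ (1 / (2 * δ) + c / 2) → Ψ (1 / (2 * δ) + c / 2) < y₂ →
      TangencySystem Hl (Hr c) y₁ y₂ →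
      y₁ < Ψ (1 / (2 * δ)) ∧ Real.log y₁ / (2 * Real.sqrt (2 * α)) < 1 / (2 * δ) := by
  have hs : 0 < √(2 * α) := by positivity
  have hleft : EqOn Hl (dkTransform √(2 * α) (leftPayoff α δ lam)) (Ioi 0) := fun y hy => by
    rw [hHl y hy, dkTransform, leftPayoff, div_pow, mul_pow, sq_sqrt (by positivity)]
    ring
  have hright (c : ℝ) :
      EqOn (Hr c) (dkTransform √(2 * α) (rightPayoff α δ lam f₀ c)) (Ioi 0) := fun y hy => by
    rw [hHr c y hy, dkTransform, rightPayoff]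
    split_ifs with hx
    · rw [hhra c _ hx, hhr1, rightPayoffInner]
    · rw [hhrb c _ (not_le.1 hx).le, hhr2, hB₀, rightPayoffOuter]
  obtain ⟨cbar, hcbar, hall⟩ := mem_nhdsGT_iff_exists_Ioo_subset.1
    (eventually_lt_of_tangency hα hδ hlam hltd hf₀big (isFreeBoundary hα hlam hltd hf₀))
  refine ⟨cbar, hcbar, fun c hc hcc y₁ y₂ hy₁ hy₁c hy₂c T => ?_⟩
  have hy₂ : 0 < y₂ := hy₁.trans (hy₁c.trans hy₂c)
  have tangency := T.congr hleft (hright c) hy₁ hy₂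
  obtain ⟨x₁, rfl⟩ := exists_exp_two_mul_eq hs.ne' hy₁
  obtain ⟨x₂, rfl⟩ := exists_exp_two_mul_eq hs.ne' hy₂
  rw [hΨ, exp_lt_exp, mul_lt_mul_iff_right₀ (by positivity)] at hy₁c hy₂c
  rw [hΨ, exp_lt_exp, mul_lt_mul_iff_right₀ (by positivity), log_exp_two_mul_div hs.ne', and_self]
  exact hall ⟨hc, hcc⟩ x₁ x₂ hy₁c hy₂c tangency

/-- for all sufficiently small c the tangency pair satisfies
y₁ < Ψ(1/(2δ)); equivalently F(c) = Ψ⁻¹(y₁) < 1/(2δ). -/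
theorem stmt_16 (α δ lam : ℝ) (hα : 0 < α) (hδ : 0 < δ) (hlam : 0 < lam)
    (hltd : lam < α * δ)
    (f₀ : ℝ)
    (hf₀ : f₀ = (1 / Real.sqrt (2 * α)) * (Real.sqrt ((α * δ + lam) / (α * δ - lam)) - 1))
    (hf₀big : α / (2 * lam) < f₀)
    (Ψ : ℝ → ℝ) (hΨ : ∀ x, Ψ x = Real.exp (2 * Real.sqrt (2 * α) * x))
    (Hl : ℝ → ℝ)
    (hHl : ∀ y, 0 < y → Hl y = Real.sqrt y *
      (-(lam / α ^ 2) + ((δ - lam / α) / (8 * α)) * (Real.log y) ^ 2))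
    (B₀ : ℝ)
    (hB₀ : B₀ = -(2 * f₀ / (α * Real.sqrt (2 * α))) * (α * δ - lam) *
      Real.exp (f₀ * Real.sqrt (2 * α)))
    (hr1 hr2 hr Hr : ℝ → ℝ → ℝ)
    (hhr1 : ∀ c x, hr1 c x = δ * c * (c - 2 * x) + (δ - lam / α) * x ^ 2 + c - lam / α ^ 2)
    (hhr2 : ∀ c x, hr2 c x = (lam / α) * c * (c - 2 * x) + c +
      B₀ * Real.exp (-(x - c) * Real.sqrt (2 * α)))
    (hhra : ∀ c x, x ≤ f₀ + c → hr c x = hr1 c x)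
    (hhrb : ∀ c x, f₀ + c ≤ x → hr c x = hr2 c x)
    (hHr : ∀ c y, 0 < y → Hr c y = Real.sqrt y * hr c (Real.log y / (2 * Real.sqrt (2 * α))))
    (xv : ℝ → ℝ)
    (hxv : ∀ c, 0 < c →
      (xv c < f₀ + c ∧
        δ - (α * δ - lam) * (xv c) ^ 2 + c * α * (δ * (2 * xv c - c) - 1) = 0 ∧
        ∀ x, x < f₀ + c →
          δ - (α * δ - lam) * x ^ 2 + c * α * (δ * (2 * x - c) - 1) = 0 → x = xv c)) :
    ∃ cbar > (0 : ℝ), ∀ c, 0 < c → c < cbar → ∀ y₁ y₂ : ℝ,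
      1 < y₁ → y₁ < Ψ (1 / (2 * δ) + c / 2) →
      Ψ (1 / (2 * δ) + c / 2) ≤ max (Ψ (1 / (2 * δ) + c / 2)) (Ψ (xv c)) →
      max (Ψ (1 / (2 * δ) + c / 2)) (Ψ (xv c)) < y₂ →
      TangencySystem Hl (Hr c) y₁ y₂ →
      y₁ < Ψ (1 / (2 * δ)) ∧ Real.log y₁ / (2 * Real.sqrt (2 * α)) < 1 / (2 * δ) := by
  have hf₀lower : 1 / (2 * δ) < f₀ := by
    refine lt_trans ?_ hf₀big
    rw [div_lt_div_iff₀ (by positivity) (by positivity)]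
    linarith
  obtain ⟨cbar, hcbar, h⟩ := stmt_16_general α δ lam hα hδ hlam hltd f₀ hf₀ hf₀lower Ψ hΨ Hl hHl
    B₀ hB₀ hr1 hr2 hr Hr hhr1 hhr2 hhra hhrb hHr
  exact ⟨cbar, hcbar, fun c hc hcc y₁ y₂ hy₁ hy₁c _ hy₂ =>
    h c hc hcc y₁ y₂ (one_pos.trans hy₁) hy₁c ((le_max_left _ _).trans_lt hy₂)⟩
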